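/- arXiv:2510.22259 — 2 statements merged into one kernel-verified Lean document; each statement's English description precedes it below -/
import Mathlib

section
/- Let s ≥ 2 be an integer such that s is odd or s ≡ 0 (mod 4). Then 5 divides n = (2^{2s}+1)(2^s−1), and the minimum distance of the code C_{(2,n,5,1)} equals exactly 5. -/
open Finset

/-- The binary cyclic (BCH-type) code of length `n` over GF(2), consisting of all
words `c` such that `∑ i, c i • β ^ (j * i) = 0` for every `j` in the check set `J`. -/
def BCHCode {F : Type} [Field F] [Algebra (ZMod 2) F] (n : ℕ) (β : F) (J : Finset ℕ) :
    Submodule (ZMod 2) (Fin n → ZMod 2) where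
  carrier := {c | ∀ j ∈ J, ∑ i : Fin n, c i • β ^ (j * (i : ℕ)) = 0}
  add_mem' := by
    intro a b ha hb j hj
    simp only [Set.mem_setOf_eq, Pi.add_apply, add_smul, Finset.sum_add_distrib] at *
    rw [ha j hj, hb j hj, add_zero]
  zero_mem' := by
    intro j hj
    simp
  smul_mem' := by
    intro r c hc j hj
    simp only [Set.mem_setOf_eq, Pi.smul_apply, smul_assoc, ← Finset.smul_sum] at *
    rw [hc j hj, smul_zero]

/-- The (Euclidean) dual of a binary linear code. -/
def dualCode {N : ℕ} (C : Submodule (ZMod 2) (Fin N → ZMod 2)) :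
    Submodule (ZMod 2) (Fin N → ZMod 2) where
  carrier := {b | ∀ c ∈ C, ∑ i, b i * c i = 0}
  add_mem' := by
    intro a b ha hb c hc
    simp only [Set.mem_setOf_eq, Pi.add_apply, add_mul, Finset.sum_add_distrib] at *
    rw [ha c hc, hb c hc, add_zero]
  zero_mem' := by
    intro c hc
    simp
  smul_mem' := by
    intro r b hb c hc
    simp only [Set.mem_setOf_eq, Pi.smul_apply, smul_eq_mul, mul_assoc, ← Finset.mul_sum] at *
    rw [hb c hc, mul_zero]

/-- The linear map appending an overall parity-check coordinate. -/
def extendMap (N : ℕ) : (Fin N → ZMod 2) →ₗ[ZMod 2] (Fin (N + 1) → ZMod 2) where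
  toFun c := fun j => if h : (j : ℕ) < N then c ⟨j, h⟩ else ∑ i, c i
  map_add' a b := by
    funext j
    by_cases h : (j : ℕ) < N <;> simp [h, Finset.sum_add_distrib]
  map_smul' r c := by
    funext j
    by_cases h : (j : ℕ) < N <;> simp [h, Finset.mul_sum]

/-- The extended code of a binary linear code. -/
def extendedCode {N : ℕ} (C : Submodule (ZMod 2) (Fin N → ZMod 2)) :
    Submodule (ZMod 2) (Fin (N + 1) → ZMod 2) :=
  C.map (extendMap N)

/-- The minimum distance (= minimum nonzero Hamming weight) of a binary linear code. -/
noncomputable def minDist {N : ℕ} (C : Submodule (ZMod 2) (Fin N → ZMod 2)) : ℕ :=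
  sInf {w | ∃ c ∈ C, c ≠ 0 ∧ hammingNorm c = w}

/-- The number of codewords of Hamming weight `w` in a binary linear code. -/
noncomputable def weightCount {N : ℕ} (C : Submodule (ZMod 2) (Fin N → ZMod 2)) (w : ℕ) : ℕ :=
  Set.ncard {c : Fin N → ZMod 2 | c ∈ C ∧ hammingNorm c = w}

/-- The 2-cyclotomic coset of `i` modulo `n`. -/
def cycCoset (n i : ℕ) : Set ℕ := {x | ∃ j : ℕ, x = i * 2 ^ j % n}

/-- The coset leader (smallest element) of the 2-cyclotomic coset of `i` modulo `n`. -/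
noncomputable def cosetLeader (n i : ℕ) : ℕ := sInf (cycCoset n i)

/-!
Squaring a check equation `∑ i, c i • β ^ (j * i) = 0` over GF(2) gives the check equation at
`2 * j`. The check set `{1, 3}` therefore defines the same code as `{1, 2, 3, 4}`, and the BCH bound
(a Vandermonde determinant supported on the codeword does not vanish) gives minimum distance at
least 5. If `5 ∣ n`, the word `1 + x ^ (n / 5) + ⋯ + x ^ (4 * n / 5)` attains the bound: its check
values are geometric sums over fifth roots of unity different from 1.
-/

/-- The `j`-th syndrome of the word `c` with respect to `β`: the value at `β ^ j` of the polynomial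
whose coefficients are the entries of `c`. -/
def syndrome {F : Type*} [Field F] [Algebra (ZMod 2) F] {n : ℕ} (β : F) (c : Fin n → ZMod 2)
    (j : ℕ) : F :=
  ∑ i : Fin n, c i • β ^ (j * (i : ℕ))

/-- The binary word of length `n` with ones exactly at the positions divisible by `k`. If
`k ∣ n`, it is the polynomial `(x ^ n - 1) / (x ^ k - 1)`, the low-weight codeword meeting the BCH
bound. -/
def multiplesWord (n k : ℕ) : Fin n → ZMod 2 := fun i => if k ∣ (i : ℕ) then 1 else 0

theorem sum_range_mul_filter_dvd {M : Type*} [AddCommMonoid M] {k : ℕ} (hk : k ≠ 0) (m : ℕ)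
    (f : ℕ → M) : ∑ i ∈ range (k * m) with k ∣ i, f i = ∑ a ∈ range m, f (k * a) := by
  have hpos : 0 < k := Nat.pos_of_ne_zero hk
  have himage : {i ∈ range (k * m) | k ∣ i} = (range m).image (k * ·) := by
    ext i
    simp only [mem_filter, mem_range, mem_image]
    constructor
    · rintro ⟨hi, a, rfl⟩
      exact ⟨a, Nat.lt_of_mul_lt_mul_left hi, rfl⟩
    · rintro ⟨a, ha, rfl⟩
      exact ⟨Nat.mul_lt_mul_of_pos_left ha hpos, dvd_mul_right k a⟩
  rw [himage, sum_image fun a _ b _ hab => Nat.eq_of_mul_eq_mul_left hpos hab]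

theorem hammingNorm_multiplesWord {k : ℕ} (hk : k ≠ 0) (m : ℕ) :
    hammingNorm (multiplesWord (k * m) k) = m := by
  calc hammingNorm (multiplesWord (k * m) k)
      = ∑ i : Fin (k * m), if k ∣ (i : ℕ) then 1 else 0 := by
        simp [hammingNorm, multiplesWord]
    _ = ∑ i ∈ range (k * m) with k ∣ i, 1 := by
        rw [Fin.sum_univ_eq_sum_range (fun i => if k ∣ i then 1 else 0), ← sum_filter]
    _ = m := by rw [sum_range_mul_filter_dvd hk]; simp

theorem eq_zero_of_forall_sum_mul_pow_eq_zero {R ι : Type*} [CommRing R] [IsDomain R]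
    {S : Finset ι} {w f : ι → R} (hf : Set.InjOn f S)
    (h : ∀ k < #S, ∑ i ∈ S, w i * f i ^ k = 0) : ∀ i ∈ S, w i = 0 := by
  let e : Fin #S ≃ S := S.equivFin.symm
  have hinj : Function.Injective fun a => f (e a) := hf.injective.comp e.injective
  have hzero : (fun a => w (e a)) = 0 := by
    refine Matrix.eq_zero_of_forall_pow_sum_mul_pow_eq_zero hinj fun k => ?_
    rw [e.sum_comp fun i : S => w i * f i ^ (k : ℕ), sum_coe_sort S fun i => w i * f i ^ (k : ℕ)]
    exact h k k.is_lt
  intro i hi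
  simpa using congrFun hzero (e.symm ⟨i, hi⟩)

theorem minDist_eq_hammingNorm {N : ℕ} {C : Submodule (ZMod 2) (Fin N → ZMod 2)}
    {c : Fin N → ZMod 2} (hc : c ∈ C) (hc0 : c ≠ 0)
    (hmin : ∀ c' ∈ C, c' ≠ 0 → hammingNorm c ≤ hammingNorm c') : minDist C = hammingNorm c := by
  refine IsLeast.csInf_eq ⟨⟨c, hc, hc0, rfl⟩, ?_⟩
  rintro _ ⟨c', hc', hc'0, rfl⟩
  exact hmin c' hc' hc'0

section BCH

variable {F : Type} [Field F] [Algebra (ZMod 2) F] {n : ℕ} {β : F} {J : Finset ℕ}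
  {c : Fin n → ZMod 2}

theorem mem_BCHCode : c ∈ BCHCode n β J ↔ ∀ j ∈ J, syndrome β c j = 0 := Iff.rfl

theorem syndrome_two_mul (β : F) (c : Fin n → ZMod 2) (j : ℕ) :
    syndrome β c (2 * j) = syndrome β c j ^ 2 := by
  have : CharP F 2 := charP_of_injective_algebraMap' (ZMod 2) 2
  simp only [syndrome, CharTwo.sum_sq, smul_pow, ZMod.pow_card, ← pow_mul, mul_assoc 2 j,
    mul_comm _ 2]

theorem BCHCode_one_three : BCHCode n β {1, 3} = BCHCode n β (Icc 1 4) := by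
  have hIcc : Icc 1 4 = {1, 2, 3, 4} := by decide
  ext c
  have h2 : syndrome β c 2 = syndrome β c 1 ^ 2 := syndrome_two_mul β c 1
  have h4 : syndrome β c 4 = syndrome β c 2 ^ 2 := syndrome_two_mul β c 2
  simp only [mem_BCHCode, hIcc, mem_insert, mem_singleton, forall_eq_or_imp, forall_eq]
  constructor
  · rintro ⟨h1, h3⟩
    have h2' : syndrome β c 2 = 0 := by rw [h2, h1, zero_pow two_ne_zero]
    exact ⟨h1, h2', h3, by rw [h4, h2', zero_pow two_ne_zero]⟩
  · rintro ⟨h1, -, h3, -⟩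
    exact ⟨h1, h3⟩

theorem lt_hammingNorm_of_mem_BCHCode (hβ : IsPrimitiveRoot β n) {b t : ℕ}
    (hJ : ∀ k < t, b + k ∈ J) (hc : c ∈ BCHCode n β J) (hc0 : c ≠ 0) : t < hammingNorm c := by
  by_contra! hle
  let S : Finset (Fin n) := {i | c i ≠ 0}
  have hinj : Set.InjOn (fun i : Fin n => β ^ (i : ℕ)) S :=
    fun i _ i' _ h => Fin.ext (hβ.pow_inj i.is_lt i'.is_lt h)
  have hsum : ∀ k < #S, ∑ i ∈ S, c i • β ^ (b * (i : ℕ)) * (β ^ (i : ℕ)) ^ k = 0 := by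
    intro k hk
    calc ∑ i ∈ S, c i • β ^ (b * (i : ℕ)) * (β ^ (i : ℕ)) ^ k
        = ∑ i ∈ S, c i • β ^ ((b + k) * (i : ℕ)) :=
          sum_congr rfl fun i _ => by rw [smul_mul_assoc, ← pow_mul, ← pow_add]; ring_nf
      _ = syndrome β c (b + k) :=
          sum_subset (subset_univ S) fun i _ hi => by simp_all [S]
      _ = 0 := hc _ (hJ k (hk.trans_le hle))
  obtain ⟨i, hi⟩ := Function.ne_iff.mp hc0
  have hn : n ≠ 0 := i.pos.ne'
  have hterm := eq_zero_of_forall_sum_mul_pow_eq_zero hinj hsum i (by simpa [S] using hi)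
  exact smul_ne_zero hi (pow_ne_zero _ (hβ.ne_zero hn)) hterm

theorem syndrome_multiplesWord (β : F) {k : ℕ} (hk : k ≠ 0) (m j : ℕ) :
    syndrome β (multiplesWord (k * m) k) j = ∑ a ∈ range m, ((β ^ k) ^ j) ^ a := by
  calc syndrome β (multiplesWord (k * m) k) j
      = ∑ i : Fin (k * m), if k ∣ (i : ℕ) then β ^ (j * (i : ℕ)) else 0 := by
        simp only [syndrome, multiplesWord, ite_smul, one_smul, zero_smul]
    _ = ∑ i ∈ range (k * m) with k ∣ i, β ^ (j * i) := by
        rw [Fin.sum_univ_eq_sum_range (fun i => if k ∣ i then β ^ (j * i) else 0), ← sum_filter]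
    _ = ∑ a ∈ range m, ((β ^ k) ^ j) ^ a := by
        rw [sum_range_mul_filter_dvd hk]
        simp only [← pow_mul, mul_assoc, mul_left_comm]

theorem multiplesWord_mem_BCHCode {k m : ℕ} (hk : k ≠ 0) (hm : m ≠ 0)
    (hβ : IsPrimitiveRoot β (k * m)) (hJ : ∀ j ∈ J, ¬ m ∣ j) :
    multiplesWord (k * m) k ∈ BCHCode (k * m) β J := by
  intro j hj
  have hroot : IsPrimitiveRoot (β ^ k) m := hβ.pow (by positivity) rfl
  have hne : (β ^ k) ^ j ≠ 1 := fun h => hJ j hj (hroot.dvd_of_pow_eq_one j h)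
  calc syndrome β (multiplesWord (k * m) k) j
      = ∑ a ∈ range m, ((β ^ k) ^ j) ^ a := syndrome_multiplesWord β hk m j
    _ = 0 := by rw [geom_sum_eq hne, pow_right_comm, hroot.pow_eq_one, one_pow, sub_self, zero_div]

theorem minDist_BCHCode_Icc_of_dvd (hn : n ≠ 0) (hβ : IsPrimitiveRoot β n) {t : ℕ}
    (ht : t + 1 ∣ n) : minDist (BCHCode n β (Icc 1 t)) = t + 1 := by
  obtain ⟨k, rfl⟩ := exists_eq_mul_left_of_dvd ht
  have hk : k ≠ 0 := left_ne_zero_of_mul hn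
  have hnorm := hammingNorm_multiplesWord hk (t + 1)
  have hmem : multiplesWord (k * (t + 1)) k ∈ BCHCode (k * (t + 1)) β (Icc 1 t) := by
    refine multiplesWord_mem_BCHCode hk t.succ_ne_zero hβ fun j hj => ?_
    rw [mem_Icc] at hj
    exact Nat.not_dvd_of_pos_of_lt hj.1 (Nat.lt_succ_of_le hj.2)
  have hne : multiplesWord (k * (t + 1)) k ≠ 0 :=
    hammingNorm_ne_zero_iff.mp (by rw [hnorm]; exact t.succ_ne_zero)
  rw [minDist_eq_hammingNorm hmem hne, hnorm]
  intro c hc hc0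
  rw [hnorm]
  exact lt_hammingNorm_of_mem_BCHCode hβ (b := 1) (fun i hi => by rw [mem_Icc]; omega) hc hc0

end BCH

theorem pow_four_sub_one_eq (q : ℕ) : q ^ 4 - 1 = (q + 1) * ((q ^ 2 + 1) * (q - 1)) := by
  calc q ^ 4 - 1 = (q ^ 2) ^ 2 - 1 ^ 2 := by rw [← pow_mul, one_pow]
    _ = (q ^ 2 + 1) * (q ^ 2 - 1 ^ 2) := by rw [Nat.sq_sub_sq, one_pow]
    _ = (q + 1) * ((q ^ 2 + 1) * (q - 1)) := by rw [Nat.sq_sub_sq, mul_left_comm]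

theorem isPrimitiveRoot_pow_two_pow_add_one {M : Type*} [CommMonoid M] {s : ℕ} (hs : s ≠ 0) {α : M}
    (hα : IsPrimitiveRoot α (2 ^ (4 * s) - 1)) :
    IsPrimitiveRoot (α ^ (2 ^ s + 1)) ((2 ^ (2 * s) + 1) * (2 ^ s - 1)) := by
  have hpos : 0 < 2 ^ (4 * s) - 1 := Nat.sub_pos_of_lt (Nat.one_lt_two_pow (by positivity))
  refine hα.pow hpos ?_
  rw [mul_comm 4, mul_comm 2, pow_mul, pow_mul, pow_four_sub_one_eq]

theorem five_dvd_two_pow_two_mul_add_one {s : ℕ} (hs : Odd s) : 5 ∣ 2 ^ (2 * s) + 1 := by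
  simpa [pow_mul] using hs.nat_add_dvd_pow_add_pow 4 1

theorem five_dvd_two_pow_sub_one {s : ℕ} (hs : 4 ∣ s) : 5 ∣ 2 ^ s - 1 :=
  (by decide : 5 ∣ 2 ^ 4 - 1).trans (Nat.pow_sub_one_dvd_pow_sub_one 2 hs)

theorem stmt_9_general {F : Type} [Field F] [Algebra (ZMod 2) F] {n : ℕ} (hn : n ≠ 0) {β : F}
    (hβ : IsPrimitiveRoot β n) (h5 : 5 ∣ n) : minDist (BCHCode n β {1, 3}) = 5 := by
  rw [BCHCode_one_three]
  exact minDist_BCHCode_Icc_of_dvd hn hβ h5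

theorem stmt_9 (s : ℕ) (hs : 2 ≤ s) (n : ℕ) (hn : n = (2 ^ (2 * s) + 1) * (2 ^ s - 1))
    (α : GaloisField 2 (4 * s)) (hα : orderOf α = 2 ^ (4 * s) - 1)
    (β : GaloisField 2 (4 * s)) (hβ : β = α ^ (2 ^ s + 1))
    (hcase : Odd s ∨ 4 ∣ s) :
    5 ∣ n ∧ minDist (BCHCode n β {1, 3}) = 5 := by
  have h5 : 5 ∣ n := hn ▸ hcase.elim (fun h => (five_dvd_two_pow_two_mul_add_one h).mul_right _)
    fun h => (five_dvd_two_pow_sub_one h).mul_left _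
  have hs0 : s ≠ 0 := by omega
  have hα' : IsPrimitiveRoot α (2 ^ (4 * s) - 1) := hα ▸ IsPrimitiveRoot.orderOf α
  have hβ' : IsPrimitiveRoot β n := hβ ▸ hn ▸ isPrimitiveRoot_pow_two_pow_add_one hs0 hα'
  have hn0 : n ≠ 0 := by
    have : 1 < 2 ^ s := Nat.one_lt_two_pow hs0
    rw [hn]
    exact mul_ne_zero (by positivity) (by omega)
  exact ⟨h5, stmt_9_general hn0 hβ' h5⟩
end

section
/- Let s ≥ 2. The code C_{(2,n,3,1)} of length n = 2^{2s}+2^s+1 has dimension n − 3s and minimum distance d satisfying 3 ≤ d ≤ 4. -/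
open Finset

/-!
The code is the kernel of the syndrome map `c ↦ ∑ i, c i • β ^ i`, whose image is `GF(2)[β]`, so its
codimension is the degree `m` of `β` over `GF(2)`. This degree is the multiplicative order of `2`
modulo `n`: since `n ∣ 2 ^ (3 * s) - 1` it divides `3 * s`, and since `n ∣ 2 ^ m - 1` forces
`2 ^ (2 * s) < 2 ^ m` it exceeds `2 * s`, hence `m = 3 * s`.

A word of weight one or two is not in the code because the powers `β ^ i`, `i < n`, are nonzero
and distinct. Conversely there are more words of weight two than the `2 ^ (3 * s)` cosets of the
code, so two of them lie in the same coset and differ by a nonzero codeword of weight at most four.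
-/

section Weight

theorem exists_ne_sub_mem_of_card_pow_lt_card {K V τ : Type*} [Field K] [Finite K]
    [AddCommGroup V] [Module K V] [FiniteDimensional K V] (C : Submodule K V)
    (S : Finset τ) (f : τ → V)
    (hS : Nat.card K ^ (Module.finrank K V - Module.finrank K C) < #S) :
    ∃ x ∈ S, ∃ y ∈ S, x ≠ y ∧ f x - f y ∈ C := by
  have : Finite (V ⧸ C) := Module.finite_of_finite K
  have : Fintype (V ⧸ C) := Fintype.ofFinite _
  have hcosets : #(univ : Finset (V ⧸ C)) < #S := by
    rwa [card_univ, Fintype.card_eq_nat_card, Module.natCard_eq_pow_finrank (K := K),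
      Submodule.finrank_quotient]
  obtain ⟨x, hx, y, hy, hxy, h⟩ := exists_ne_map_eq_of_card_lt_of_maps_to hcosets
    (f := fun x ↦ C.mkQ (f x)) fun _ _ ↦ mem_univ _
  exact ⟨x, hx, y, hy, hxy, (Submodule.Quotient.eq C).1 h⟩

theorem exists_ne_zero_mem_hammingNorm_le_two_mul {K ι : Type*} [Field K] [Finite K] [DecidableEq K]
    [Fintype ι] (C : Submodule K (ι → K)) {t : ℕ}
    (h : Nat.card K ^ (Fintype.card ι - Module.finrank K C) < (Fintype.card ι).choose t) :
    ∃ c ∈ C, c ≠ 0 ∧ hammingNorm c ≤ 2 * t := by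
  classical
  let word (P : Finset ι) (i : ι) : K := if i ∈ P then 1 else 0
  have hsupport (P : Finset ι) (i : ι) : word P i ≠ 0 ↔ i ∈ P := by simp [word]
  have hword : Function.Injective word := fun P Q hPQ ↦ by
    ext i
    rw [← hsupport, hPQ, hsupport]
  have hweight (P : Finset ι) : hammingNorm (word P) = #P := by simp [hammingNorm, hsupport]
  obtain ⟨P, hP, Q, hQ, hPQ, hmem⟩ := exists_ne_sub_mem_of_card_pow_lt_card C
    (powersetCard t univ) word (by simpa using h)
  refine ⟨_, hmem, sub_ne_zero.2 (hword.ne hPQ), ?_⟩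
  calc hammingNorm (word P - word Q)
      = hammingDist (word Q) (word P) := by rw [hammingDist_eq_hammingNorm, neg_add_eq_sub]
    _ ≤ hammingDist (word Q) 0 + hammingDist 0 (word P) := hammingDist_triangle _ _ _
    _ = 2 * t := by
      rw [hammingDist_zero_right, hammingDist_zero_left, hweight, hweight,
        (mem_powersetCard.1 hP).2, (mem_powersetCard.1 hQ).2, two_mul]

theorem sum_smul_eq_sum_filter_ne_zero {V ι : Type*} [AddCommGroup V] [Module (ZMod 2) V]
    [Fintype ι] (c : ι → ZMod 2) (v : ι → V) :
    ∑ i, c i • v i = ∑ i with c i ≠ 0, v i := by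
  rw [sum_filter]
  refine sum_congr rfl fun i _ ↦ ?_
  split_ifs with hi
  · rw [show c i = 1 from Fin.eq_one_of_ne_zero _ hi, one_smul]
  · rw [not_not.1 hi, zero_smul]

theorem three_le_hammingNorm_of_sum_smul_eq_zero {V ι : Type*} [AddCommGroup V]
    [Module (ZMod 2) V] [Fintype ι] {v : ι → V} (hv : Function.Injective v)
    (hv0 : ∀ i, v i ≠ 0) {c : ι → ZMod 2} (hc0 : c ≠ 0) (hc : ∑ i, c i • v i = 0) :
    3 ≤ hammingNorm c := by
  classical
  rw [sum_smul_eq_sum_filter_ne_zero] at hc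
  have hpos : 0 < hammingNorm c := hammingNorm_pos_iff.2 hc0
  by_contra! hlt
  obtain h1 | h2 : hammingNorm c = 1 ∨ hammingNorm c = 2 := by lia
  · obtain ⟨a, ha⟩ := card_eq_one.1 h1
    rw [ha, sum_singleton] at hc
    exact hv0 a hc
  · obtain ⟨a, b, hab, hsupp⟩ := card_eq_two.1 h2
    rw [hsupp, sum_pair hab, add_eq_zero_iff_eq_neg, ZModModule.neg_eq_self] at hc
    exact hab (hv hc)

end Weight

section MinDist

variable {N : ℕ} {C : Submodule (ZMod 2) (Fin N → ZMod 2)}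

theorem minDist_le_hammingNorm {c : Fin N → ZMod 2} (hc : c ∈ C) (hc0 : c ≠ 0) :
    minDist C ≤ hammingNorm c :=
  Nat.sInf_le ⟨c, hc, hc0, rfl⟩

theorem le_minDist (hC : C ≠ ⊥) {d : ℕ} (h : ∀ c ∈ C, c ≠ 0 → d ≤ hammingNorm c) :
    d ≤ minDist C := by
  obtain ⟨c, hc, hc0⟩ := C.ne_bot_iff.1 hC
  refine le_csInf ⟨_, c, hc, hc0, rfl⟩ ?_
  rintro _ ⟨c', hc', hc0', rfl⟩
  exact h c' hc' hc0'

end MinDist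

section Arithmetic

theorem pow_three_sub_one (q : ℕ) : q ^ 3 - 1 = (q - 1) * (q ^ 2 + q + 1) := by
  cases q with
  | zero => rfl
  | succ r =>
    rw [Nat.add_sub_cancel]
    apply Nat.sub_eq_of_eq_add
    ring

theorem orderOf_pow_sub_one {G : Type*} [Monoid G] {q : ℕ} (hq : 1 < q) {x : G}
    (hx : orderOf x = q ^ 3 - 1) : orderOf (x ^ (q - 1)) = q ^ 2 + q + 1 := by
  rw [pow_three_sub_one] at hx
  rw [orderOf_pow_of_dvd (by lia) (hx ▸ dvd_mul_right _ _), hx,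
    Nat.mul_div_cancel_left _ (by lia)]

theorem pow_three_lt_choose_two {q : ℕ} (hq : q ≠ 0) : q ^ 3 < (q ^ 2 + q + 1).choose 2 := by
  have hpos : 0 < q := Nat.pos_of_ne_zero hq
  rw [Nat.choose_two_right, Nat.add_sub_cancel, Nat.lt_iff_add_one_le,
    Nat.le_div_iff_mul_le two_pos]
  linarith [Nat.one_le_pow 4 q hpos, Nat.one_le_pow 2 q hpos]

end Arithmetic

section Minpoly

theorem isIntegral_of_isOfFinOrder {R A : Type*} [CommRing R] [Ring A] [Algebra R A] {x : A}
    (hx : IsOfFinOrder x) : IsIntegral R x :=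
  .of_pow hx.orderOf_pos (pow_orderOf_eq_one x ▸ isIntegral_one)

theorem finrank_adjoin_singleton_eq_natDegree_minpoly {K A : Type*} [Field K] [CommRing A]
    [Algebra K A] {x : A} (hx : IsIntegral K x) :
    Module.finrank K (Algebra.adjoin K {x}) = (minpoly K x).natDegree :=
  (Algebra.adjoin.powerBasis hx).finrank

theorem range_linearCombination_pow_eq_adjoin {R A : Type*} [CommRing R] [Ring A]
    [Algebra R A] {n : ℕ} (hn : n ≠ 0) {x : A} (hx : x ^ n = 1) :
    LinearMap.range (Fintype.linearCombination R fun i : Fin n ↦ x ^ (i : ℕ)) =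
      Subalgebra.toSubmodule (Algebra.adjoin R {x}) := by
  rw [Fintype.range_linearCombination, Algebra.adjoin_eq_span]
  congr 1
  ext y
  rw [SetLike.mem_coe, Submonoid.mem_closure_singleton]
  constructor
  · rintro ⟨i, rfl⟩
    exact ⟨i, rfl⟩
  · rintro ⟨k, rfl⟩
    exact ⟨⟨k % n, Nat.mod_lt k (Nat.pos_of_ne_zero hn)⟩, (pow_eq_pow_mod k hx).symm⟩

variable {K L : Type*} [Field K] [Finite K] [Field L] [Algebra K L] {x : L}

theorem natDegree_minpoly_dvd_iff_pow_card_pow_eq (hx : IsIntegral K x) {k : ℕ} :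
    (minpoly K x).natDegree ∣ k ↔ x ^ Nat.card K ^ k = x := by
  rw [(minpoly.irreducible hx).natDegree_dvd_iff_dvd_X_pow_card_pow_sub_X, minpoly.dvd_iff]
  simp [sub_eq_zero]

theorem natDegree_minpoly_dvd_iff_orderOf_dvd (hx : IsOfFinOrder x) {k : ℕ} :
    (minpoly K x).natDegree ∣ k ↔ orderOf x ∣ Nat.card K ^ k - 1 := by
  have hcard : 1 ≤ Nat.card K ^ k := Nat.one_le_pow _ _ Nat.card_pos
  rw [natDegree_minpoly_dvd_iff_pow_card_pow_eq (isIntegral_of_isOfFinOrder hx),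
    orderOf_dvd_iff_pow_eq_one, ← Nat.sub_add_cancel hcard, pow_succ, Nat.add_sub_cancel,
    mul_eq_right₀ hx.isUnit.ne_zero]

theorem natDegree_minpoly_eq_three_mul_of_orderOf_eq {s : ℕ} (hs : s ≠ 0)
    (hx : orderOf x = Nat.card K ^ (2 * s) + Nat.card K ^ s + 1) :
    (minpoly K x).natDegree = 3 * s := by
  set q := Nat.card K
  have hq : 1 < q := Finite.one_lt_card
  have hfin : IsOfFinOrder x := orderOf_pos_iff.1 (by lia)
  have hdvd : (minpoly K x).natDegree ∣ 3 * s := by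
    rw [natDegree_minpoly_dvd_iff_orderOf_dvd hfin, hx, pow_mul', pow_mul',
      pow_three_sub_one]
    exact dvd_mul_left _ _
  have hpos : 0 < (minpoly K x).natDegree := minpoly.natDegree_pos (isIntegral_of_isOfFinOrder hfin)
  have hlt : 2 * s < (minpoly K x).natDegree := by
    have horder := (natDegree_minpoly_dvd_iff_orderOf_dvd (K := K) hfin).1 dvd_rfl
    have hle := Nat.le_of_dvd (Nat.sub_pos_of_lt (Nat.one_lt_pow hpos.ne' hq)) horder
    rw [hx] at hle
    exact (Nat.pow_lt_pow_iff_right hq).1 (by lia)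
  exact (Nat.eq_of_dvd_of_lt_two_mul (by lia) hdvd (by lia)).symm

end Minpoly

namespace BCHCode

variable {F : Type} [Field F] [Algebra (ZMod 2) F] {n : ℕ} {β : F}

theorem mem_singleton_one {c : Fin n → ZMod 2} :
    c ∈ BCHCode n β {1} ↔ ∑ i, c i • β ^ (i : ℕ) = 0 := by
  simp [BCHCode]

theorem singleton_one_eq_ker :
    BCHCode n β {1} =
      LinearMap.ker (Fintype.linearCombination (ZMod 2) fun i : Fin n ↦ β ^ (i : ℕ)) := by
  ext c
  rw [mem_singleton_one, LinearMap.mem_ker, Fintype.linearCombination_apply]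

theorem finrank_add_natDegree_minpoly (hn : n ≠ 0) (hβ : β ^ n = 1) :
    Module.finrank (ZMod 2) (BCHCode n β {1}) + (minpoly (ZMod 2) β).natDegree = n := by
  have hfin : IsOfFinOrder β := isOfFinOrder_iff_pow_eq_one.2 ⟨n, Nat.pos_of_ne_zero hn, hβ⟩
  have hrank := LinearMap.finrank_range_add_finrank_ker
    (Fintype.linearCombination (ZMod 2) fun i : Fin n ↦ β ^ (i : ℕ))
  rw [range_linearCombination_pow_eq_adjoin hn hβ, ← singleton_one_eq_ker,
    Module.finrank_fin_fun] at hrank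
  rw [← finrank_adjoin_singleton_eq_natDegree_minpoly (isIntegral_of_isOfFinOrder hfin), add_comm]
  exact hrank

theorem three_le_hammingNorm (hβ : orderOf β = n) {c : Fin n → ZMod 2}
    (hc : c ∈ BCHCode n β {1}) (hc0 : c ≠ 0) : 3 ≤ hammingNorm c := by
  refine three_le_hammingNorm_of_sum_smul_eq_zero (v := fun i : Fin n ↦ β ^ (i : ℕ)) ?_ ?_ hc0
    (mem_singleton_one.1 hc)
  · exact fun i j hij ↦ Fin.ext (pow_injOn_Iio_orderOf (by simp [hβ]) (by simp [hβ]) hij)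
  · intro i
    have hfin : IsOfFinOrder β := orderOf_pos_iff.1 (hβ ▸ i.pos)
    exact pow_ne_zero _ hfin.isUnit.ne_zero

end BCHCode

theorem stmt_11_general {F : Type} [Field F] [Algebra (ZMod 2) F] {s n : ℕ} (hs : s ≠ 0)
    (hn : n = 2 ^ (2 * s) + 2 ^ s + 1) {β : F} (hβ : orderOf β = n) :
    Module.finrank (ZMod 2) (BCHCode n β {1}) = n - 3 * s ∧
    3 ≤ minDist (BCHCode n β {1}) ∧
    minDist (BCHCode n β {1}) ≤ 4 := by
  have hdegree : (minpoly (ZMod 2) β).natDegree = 3 * s :=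
    natDegree_minpoly_eq_three_mul_of_orderOf_eq hs (by rw [Nat.card_zmod, hβ, hn])
  have hdim := BCHCode.finrank_add_natDegree_minpoly (by lia) (hβ ▸ pow_orderOf_eq_one β)
  rw [hdegree] at hdim
  have hcosets : 2 ^ (3 * s) < n.choose 2 := by
    rw [hn, pow_mul', pow_mul']
    exact pow_three_lt_choose_two (by positivity)
  obtain ⟨c, hc, hc0, hc4⟩ := exists_ne_zero_mem_hammingNorm_le_two_mul (BCHCode n β {1}) (t := 2)
    (by rwa [Fintype.card_fin, Nat.card_zmod, Nat.sub_eq_of_eq_add' hdim.symm])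
  exact ⟨Nat.eq_sub_of_add_eq hdim,
    le_minDist ((Submodule.ne_bot_iff _).2 ⟨c, hc, hc0⟩) fun _ ↦ BCHCode.three_le_hammingNorm hβ,
    (minDist_le_hammingNorm hc hc0).trans hc4⟩

theorem stmt_11 (s : ℕ) (hs : 2 ≤ s) (n : ℕ) (hn : n = 2 ^ (2 * s) + 2 ^ s + 1)
    (α : GaloisField 2 (3 * s)) (hα : orderOf α = 2 ^ (3 * s) - 1)
    (β : GaloisField 2 (3 * s)) (hβ : β = α ^ (2 ^ s - 1)) :
    Module.finrank (ZMod 2) (BCHCode n β {1}) = n - 3 * s ∧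
    3 ≤ minDist (BCHCode n β {1}) ∧
    minDist (BCHCode n β {1}) ≤ 4 := by
  refine stmt_11_general (by lia) hn ?_
  rw [hβ, hn, pow_mul']
  exact orderOf_pow_sub_one (Nat.one_lt_two_pow (by lia)) (by rw [hα, pow_mul'])
end
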